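/- arXiv:1511.04957 — 2 statements merged into one kernel-verified Lean document; each statement's English description precedes it below -/
import Mathlib

section
/- Let F be a field of characteristic zero, let n ≥ 2, and let R = F[x_1,…,x_{n-1}]. The n-ary Dzhumadildaev bracket {f_1,…,f_n} = det M (with M the n×n matrix whose first row is (f_1,…,f_n) and whose (i+1)-th row is (∂f_1/∂x_i,…,∂f_n/∂x_i)) satisfies the Filippov–Jacobi identity: for all a_1,…,a_{n-1}, b_1,…,b_n in R, {a_1,…,a_{n-1}, {b_1,…,b_n}} = Σ_{i=1}^n {b_1,…,b_{i-1}, {a_1,…,a_{n-1}, b_i}, b_{i+1},…,b_n}. In particular, R with the Dzhumadildaev bracket is an n-Lie (Filippov) algebra. -/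
open MvPolynomial

/-- The n-ary Dzhumadildaev bracket on F[x_1,…,x_{n-1}]:
`{f_1,…,f_n} = det M`, where the first row of `M` is `(f_1,…,f_n)` and the
`(i+1)`-th row is `(∂f_1/∂x_i,…,∂f_n/∂x_i)`. -/
noncomputable def dzhumaBracket (F : Type*) [Field F] (n : ℕ)
    (f : Fin n → MvPolynomial (Fin (n - 1)) F) : MvPolynomial (Fin (n - 1)) F :=
  (Matrix.of fun i j : Fin n =>
    if h : (i : ℕ) = 0 then f j
    else pderiv (⟨(i : ℕ) - 1, by omega⟩ : Fin (n - 1)) (f j)).det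

/-! With the other arguments fixed, the bracket is a first-order operator
`D = c₀ + ∑ᵢ cᵢ ∂ᵢ` in the remaining one, the coefficients being cofactors of the matrix. Letting
any such `D` act on one argument of `{b₁, …, bₙ}` at a time and summing gives
`D {b₁, …, bₙ} + ((n - 1) c₀ + ∑ᵢ ∂ᵢ cᵢ) {b₁, …, bₙ}`. For cofactors, antisymmetry of the
determinant against symmetry of second derivatives gives `∑ᵢ ∂ᵢ cᵢ = -(n - 1) c₀`, a variant of the
Piola identity for Jacobian cofactors, so the error term vanishes. -/

open Matrix

theorem sum_sum_eq_zero_of_antisymm {ι M : Type*} [Fintype ι] [AddCommGroup M]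
    {T : ι → ι → M} (hdiag : ∀ i, T i i = 0) (hanti : ∀ i j, i ≠ j → T i j = -T j i) :
    ∑ i, ∑ j, T i j = 0 := by
  classical
  rw [← Fintype.sum_prod_type']
  refine Finset.sum_involution (fun p _ => p.swap) ?_ ?_ (fun _ _ => Finset.mem_univ _)
    (fun _ _ => Prod.swap_swap _)
  · rintro ⟨i, j⟩ -
    obtain rfl | hij := eq_or_ne i j
    · simp [hdiag]
    · simp [hanti i j hij]
  · rintro ⟨i, j⟩ - hne hfix
    obtain rfl : j = i := congrArg Prod.fst hfix
    exact hne (hdiag _)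

section Derivation

variable {ι k R M : Type*} [CommSemiring k] [CommSemiring R] [AddCommMonoid M] [Algebra k R]
  [Module R M] [Module k M]

theorem derivation_sum_apply (s : Finset ι) (D : ι → Derivation k R M) (x : R) :
    (∑ i ∈ s, D i) x = ∑ i ∈ s, D i x := by
  simpa only [Finset.sum_apply] using!
    congrFun (map_sum Derivation.coeFnAddMonoidHom D s) x

theorem derivation_dotProduct [Fintype ι] (D : Derivation k R R) (u v : ι → R) :
    D (u ⬝ᵥ v) = u ⬝ᵥ (D ∘ v) + (D ∘ u) ⬝ᵥ v := by
  simp [dotProduct, Finset.sum_add_distrib, mul_comm]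

theorem derivation_prod [DecidableEq ι] (D : Derivation k R M) (s : Finset ι) (f : ι → R) :
    D (∏ i ∈ s, f i) = ∑ i ∈ s, (∏ j ∈ s.erase i, f j) • D (f i) := by
  induction s using Finset.induction_on with
  | empty => simp
  | insert a s ha ih =>
    have herase : ∀ i ∈ s, ∏ j ∈ (insert a s).erase i, f j = f a * ∏ j ∈ s.erase i, f j := by
      intro i hi
      rw [Finset.erase_insert_of_ne (ne_of_mem_of_not_mem hi ha).symm,
        Finset.prod_insert fun h => ha (Finset.mem_of_mem_erase h)]
    rw [Finset.prod_insert ha, D.leibniz, ih, Finset.sum_insert ha, Finset.erase_insert ha,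
      Finset.smul_sum, add_comm]
    congr 1
    exact Finset.sum_congr rfl fun i hi => by rw [herase i hi, mul_smul]

end Derivation

section Determinant

variable {ι k R : Type*} [Fintype ι] [DecidableEq ι] [CommSemiring k] [CommRing R] [Algebra k R]

theorem derivation_det_eq_sum_updateCol (D : Derivation k R R) (M : Matrix ι ι R) :
    D M.det = ∑ j, (M.updateCol j fun i => D (M i j)).det := by
  have hterm (σ : Equiv.Perm ι) (j : ι) :
      ∏ l, M.updateCol j (fun i => D (M i j)) (σ l) l =
        (∏ l ∈ Finset.univ.erase j, M (σ l) l) • D (M (σ j) j) := by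
    rw [← Finset.prod_erase_mul _ _ (Finset.mem_univ j), updateCol_self, smul_eq_mul]
    congr 1
    exact Finset.prod_congr rfl fun l hl => updateCol_ne (Finset.ne_of_mem_erase hl)
  simp only [det_apply, map_sum]
  rw [Finset.sum_comm]
  refine Finset.sum_congr rfl fun σ _ => ?_
  rw [Units.smul_def, map_zsmul, derivation_prod, Finset.smul_sum]
  exact Finset.sum_congr rfl fun j _ => by rw [hterm, Units.smul_def]

theorem derivation_det_eq_sum_updateRow (D : Derivation k R R) (M : Matrix ι ι R) :
    D M.det = ∑ i, (M.updateRow i fun j => D (M i j)).det := by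
  rw [← det_transpose, derivation_det_eq_sum_updateCol]
  exact Finset.sum_congr rfl fun i _ => by
    rw [updateCol_transpose, det_transpose]
    rfl

theorem sum_det_updateCol_mulVec (N M : Matrix ι ι R) :
    ∑ j, (M.updateCol j (N *ᵥ M.col j)).det = N.trace * M.det := by
  have hcol (j : ι) : (M.updateCol j (N *ᵥ M.col j)).det = (M.adjugate * (N * M)) j j := by
    rw [← cramer_apply, cramer_eq_adjugate_mulVec]
    rfl
  calc ∑ j, (M.updateCol j (N *ᵥ M.col j)).det
      = (M.adjugate * (N * M)).trace := Finset.sum_congr rfl fun j _ => hcol j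
    _ = (N * (M * M.adjugate)).trace := by rw [trace_mul_comm, Matrix.mul_assoc]
    _ = N.trace * M.det := by
      rw [mul_adjugate, Matrix.mul_smul, Matrix.mul_one, trace_smul, smul_eq_mul, mul_comm]

theorem det_updateRow_updateRow_swap (M : Matrix ι ι R) {i r : ι} (h : i ≠ r) (u v : ι → R) :
    ((M.updateRow i u).updateRow r v).det = -((M.updateRow i v).updateRow r u).det := by
  have hperm : (M.updateRow i u).updateRow r v =
      ((M.updateRow i v).updateRow r u).submatrix (Equiv.swap i r) id := by
    ext s t
    obtain rfl | hi := eq_or_ne s i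
    · simp [h]
    obtain rfl | hr := eq_or_ne s r
    · simp [h]
    · simp [hi, hr, Equiv.swap_apply_of_ne_of_ne hi hr]
  rw [hperm, det_permute, Equiv.Perm.sign_swap h]
  simp

theorem derivation_adjugate_apply (D : Derivation k R R) (M : Matrix ι ι R) (i j : ι) :
    D (M.adjugate i j) = ∑ r, if r = j then 0 else
      ((M.updateRow j (Pi.single i 1)).updateRow r fun l => D (M r l)).det := by
  rw [adjugate_apply, derivation_det_eq_sum_updateRow]
  refine Finset.sum_congr rfl fun r _ => ?_
  split_ifs with hr
  · subst hr
    refine det_eq_zero_of_row_eq_zero r fun l => ?_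
    rw [updateRow_self, updateRow_self, Pi.single_apply]
    split_ifs <;> simp
  · simp only [updateRow_ne hr]

end Determinant

section DerivationBracket

variable {k R : Type*} [CommSemiring k] [CommRing R] [Algebra k R] {m : ℕ}
  {d : Fin m → Derivation k R R}

/-- The first-order jet `(x, d₁ x, …, dₘ x)` of `x` along a family of derivations. The value itself
sits in slot `0`, so the derivative along `d i` is in slot `i.succ`. -/
def jet (d : Fin m → Derivation k R R) (x : R) : Fin (m + 1) → R :=
  Fin.cons x fun i => d i x

@[simp]
theorem jet_zero (x : R) : jet d x 0 = x := rfl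

@[simp]
theorem jet_succ (x : R) (i : Fin m) : jet d x i.succ = d i x := rfl

theorem derivation_comp_jet (hd : ∀ i j x, d i (d j x) = d j (d i x)) (i : Fin m) (x : R) :
    d i ∘ jet d x = jet d (d i x) := by
  ext p
  refine Fin.cases rfl (fun p => hd i p x) p

/-- The derivation `c₁ d₁ + ⋯ + cₘ dₘ`, which is the part without constant term of the first-order
operator `x ↦ c ⬝ᵥ jet d x`; slot `0` of `c` is ignored. -/
def principalPart (d : Fin m → Derivation k R R) (c : Fin (m + 1) → R) : Derivation k R R :=
  ∑ i : Fin m, c i.succ • d i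

theorem dotProduct_jet (c : Fin (m + 1) → R) (x : R) :
    c ⬝ᵥ jet d x = c 0 * x + principalPart d c x := by
  simp [dotProduct, Fin.sum_univ_succ, principalPart, derivation_sum_apply]

/-- The Wronskian-type matrix whose columns are the jets of the entries of `f`. -/
def jetMatrix (d : Fin m → Derivation k R R) (f : Fin (m + 1) → R) :
    Matrix (Fin (m + 1)) (Fin (m + 1)) R :=
  Matrix.of fun i j => jet d (f j) i

@[simp]
theorem jetMatrix_apply (f : Fin (m + 1) → R) (i j : Fin (m + 1)) :
    jetMatrix d f i j = jet d (f j) i := rfl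

theorem jetMatrix_update (f : Fin (m + 1) → R) (j : Fin (m + 1)) (x : R) :
    jetMatrix d (Function.update f j x) = (jetMatrix d f).updateCol j (jet d x) := by
  ext i l
  obtain rfl | h := eq_or_ne l j
  · simp
  · simp [h]

/-- The `(m + 1)`-ary bracket attached to `m` derivations; Dzhumadildaev's bracket is the case
of the partial derivatives on a polynomial ring. -/
def derivationBracket (d : Fin m → Derivation k R R) (f : Fin (m + 1) → R) : R :=
  (jetMatrix d f).det

theorem derivationBracket_update (f : Fin (m + 1) → R) (j : Fin (m + 1)) (x : R) :
    derivationBracket d (Function.update f j x) = (jetMatrix d f).adjugate j ⬝ᵥ jet d x := by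
  rw [derivationBracket, jetMatrix_update, ← cramer_apply, cramer_eq_adjugate_mulVec]
  rfl

/-- The matrix of derivatives of the coefficients `c` of the operator `x ↦ c ⬝ᵥ jet d x`, with a
zero row on top so that it acts on jets. -/
def coeffDerivMatrix (d : Fin m → Derivation k R R) (c : Fin (m + 1) → R) :
    Matrix (Fin (m + 1)) (Fin (m + 1)) R :=
  Matrix.of (Fin.cons 0 fun i p => d i (c p))

theorem trace_coeffDerivMatrix (c : Fin (m + 1) → R) :
    (coeffDerivMatrix d c).trace = ∑ i : Fin m, d i (c i.succ) := by
  simp [trace, Fin.sum_univ_succ, coeffDerivMatrix]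

theorem jet_dotProduct_jet (hd : ∀ i j x, d i (d j x) = d j (d i x)) (c : Fin (m + 1) → R)
    (x : R) :
    jet d (c ⬝ᵥ jet d x) =
      c 0 • jet d x + principalPart d c ∘ jet d x + coeffDerivMatrix d c *ᵥ jet d x := by
  ext i
  refine Fin.cases ?_ (fun i => ?_) i
  · simp [dotProduct_jet, coeffDerivMatrix, mulVec]
  · calc d i (c ⬝ᵥ jet d x)
        = c ⬝ᵥ jet d (d i x) + (d i ∘ c) ⬝ᵥ jet d x := by
          rw [derivation_dotProduct, derivation_comp_jet hd]
      _ = c 0 * d i x + principalPart d c (d i x) + (d i ∘ c) ⬝ᵥ jet d x := by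
          rw [dotProduct_jet]

theorem sum_derivationBracket_update_dotProduct_jet
    (hd : ∀ i j x, d i (d j x) = d j (d i x)) (c b : Fin (m + 1) → R) :
    ∑ j, derivationBracket d (Function.update b j (c ⬝ᵥ jet d (b j))) =
      c ⬝ᵥ jet d (derivationBracket d b) +
        (m * c 0 + ∑ i : Fin m, d i (c i.succ)) * derivationBracket d b := by
  set V := principalPart d c
  set M := jetMatrix d b
  have hterm (j : Fin (m + 1)) :
      derivationBracket d (Function.update b j (c ⬝ᵥ jet d (b j))) =
        c 0 * M.det + (M.updateCol j fun i => V (M i j)).det +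
          (M.updateCol j (coeffDerivMatrix d c *ᵥ M.col j)).det := by
    have hjet : jet d (b j) = M.col j := rfl
    have hself : M.updateCol j (M.col j) = M := updateCol_eq_self M j
    rw [derivationBracket, jetMatrix_update, jet_dotProduct_jet hd, det_updateCol_add,
      det_updateCol_add, det_updateCol_smul, hjet, hself]
    rfl
  calc ∑ j, derivationBracket d (Function.update b j (c ⬝ᵥ jet d (b j)))
      = (m + 1) * (c 0 * M.det) + V M.det + (coeffDerivMatrix d c).trace * M.det := by
        simp only [hterm, Finset.sum_add_distrib, ← derivation_det_eq_sum_updateCol,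
          sum_det_updateCol_mulVec]
        simp
    _ = c ⬝ᵥ jet d M.det + (m * c 0 + ∑ i : Fin m, d i (c i.succ)) * M.det := by
        rw [trace_coeffDerivMatrix, dotProduct_jet]
        ring

theorem sum_derivation_adjugate_jetMatrix (hd : ∀ i j x, d i (d j x) = d j (d i x))
    (f : Fin (m + 1) → R) (l : Fin (m + 1)) :
    ∑ i : Fin m, d i ((jetMatrix d f).adjugate l i.succ) =
      -(m * (jetMatrix d f).adjugate l 0) := by
  set A := jetMatrix d f
  let e : Fin (m + 1) → R := Pi.single l 1
  let T (i r : Fin m) : R := if r = i then 0 else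
    ((A.updateRow i.succ e).updateRow r.succ fun j => d i (d r (f j))).det
  have hT_diag (i : Fin m) : T i i = 0 := if_pos rfl
  have hT_antisymm (i r : Fin m) (h : i ≠ r) : T i r = -T r i := by
    simp only [T, if_neg h, if_neg h.symm, hd r i]
    have hsucc : i.succ ≠ r.succ := (Fin.succ_injective m).ne h
    rw [det_updateRow_updateRow_swap A hsucc, updateRow_comm A hsucc]
  have htop (i : Fin m) :
      ((A.updateRow i.succ e).updateRow 0 fun j => d i (f j)).det = -A.adjugate l 0 := by
    have hrow : (fun j => d i (f j)) = A i.succ := rfl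
    rw [det_updateRow_updateRow_swap A (Fin.succ_ne_zero i), hrow, updateRow_eq_self,
      adjugate_apply]
  have hterm (i : Fin m) : d i (A.adjugate l i.succ) = -A.adjugate l 0 + ∑ r, T i r := by
    rw [derivation_adjugate_apply, Fin.sum_univ_succ, if_neg (Fin.succ_ne_zero i).symm,
      ← htop i]
    simp [T, A, e]
  calc ∑ i : Fin m, d i (A.adjugate l i.succ)
      = ∑ _i : Fin m, -A.adjugate l 0 + ∑ i, ∑ r, T i r := by
        simp only [hterm, Finset.sum_add_distrib]
    _ = -(m * A.adjugate l 0) := by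
        rw [sum_sum_eq_zero_of_antisymm hT_diag hT_antisymm]
        simp

theorem dzhumaBracket_filippov_general (hd : ∀ i j x, d i (d j x) = d j (d i x))
    (a b : Fin (m + 1) → R) (l : Fin (m + 1)) :
    derivationBracket d (Function.update a l (derivationBracket d b)) =
      ∑ j, derivationBracket d (Function.update b j
        (derivationBracket d (Function.update a l (b j)))) := by
  simp only [derivationBracket_update a l]
  rw [sum_derivationBracket_update_dotProduct_jet hd, sum_derivation_adjugate_jetMatrix hd,
    add_neg_cancel, zero_mul, add_zero]

end DerivationBracket

theorem pderiv_comm {σ R : Type*} [CommSemiring R] (i j : σ) (p : MvPolynomial σ R) :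
    pderiv i (pderiv j p) = pderiv j (pderiv i p) := by
  classical
  ext s
  obtain rfl | hij := eq_or_ne i j
  · rfl
  · simp [coeff_pderiv, hij, hij.symm, add_right_comm, mul_right_comm]

theorem dzhumaBracket_succ (F : Type*) [Field F] (m : ℕ)
    (f : Fin (m + 1) → MvPolynomial (Fin m) F) :
    dzhumaBracket F (m + 1) f = derivationBracket (fun i : Fin m => pderiv (R := F) i) f := by
  unfold dzhumaBracket derivationBracket
  congr 1
  ext1 i j
  refine Fin.cases ?_ (fun i => ?_) i <;> simp

/-- The Dzhumadildaev bracket satisfies the Filippov–Jacobi identity: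
`{a_1,…,a_{n-1}, {b_1,…,b_n}} = Σ_i {b_1,…, {a_1,…,a_{n-1}, b_i}, …, b_n}`.
Here `{a_1,…,a_{n-1}, x}` is encoded by updating the last slot of `a` to `x`. -/
theorem dzhumaBracket_filippov (F : Type*) [Field F] [CharZero F]
    (n : ℕ) (hn : 2 ≤ n)
    (a b : Fin n → MvPolynomial (Fin (n - 1)) F) :
    dzhumaBracket F n (Function.update a ⟨n - 1, by omega⟩ (dzhumaBracket F n b)) =
      ∑ i : Fin n, dzhumaBracket F n (Function.update b i
        (dzhumaBracket F n (Function.update a ⟨n - 1, by omega⟩ (b i)))) := by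
  obtain ⟨m, rfl⟩ : ∃ m, n = m + 1 := ⟨n - 1, by omega⟩
  simpa only [dzhumaBracket_succ] using dzhumaBracket_filippov_general pderiv_comm a b _
end

section
/- Let F be a field of characteristic zero, let A be a commutative unital F-algebra, and let n ≥ 1. Suppose b : A^n → A is F-multilinear, alternating (it vanishes whenever two arguments coincide), satisfies the Filippov–Jacobi identity b(a_1,…,a_{n-1}, b(c_1,…,c_n)) = Σ_{i=1}^n b(c_1,…,b(a_1,…,a_{n-1},c_i),…,c_n), and satisfies the generalized Leibniz rule b(f_1,…,f_{n-1}, g·h) = b(f_1,…,f_{n-1}, g)·h + g·b(f_1,…,f_{n-1}, h) − b(f_1,…,f_{n-1}, 1)·g·h; that is, (A, b, ·) is a generalized n-Nambu-Poisson algebra. Then for every invertible element φ of A, the gauge-twisted bracket b^φ(f_1,…,f_n) = φ^{-1}·b(φ·f_1,…,φ·f_n) is again F-multilinear, alternating, satisfies the Filippov–Jacobi identity, and satisfies the generalized Leibniz rule; that is, (A, b^φ, ·) is a generalized n-Nambu-Poisson algebra. -/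
/-- The gauge-twisted bracket `b^φ(f_1,…,f_n) = φ⁻¹·b(φ·f_1,…,φ·f_n)`. -/
def gaugeTwist {A : Type*} [CommRing A] {n : ℕ} (b : (Fin n → A) → A) (φ : Aˣ) :
    (Fin n → A) → A :=
  fun f => (↑φ⁻¹ : A) * b fun i => (φ : A) * f i

/-!
Since `φ` is invertible, `b^φ` is the transport of `b` along the linear automorphism `x ↦ φ * x`,
and multilinearity, alternation and the Filippov–Jacobi identity are invariant under such a
transport. The Leibniz rule involves the product, which this automorphism does not preserve; it
survives because the correction term `b(f_1,…,f_{n-1}, 1) * g * h` makes the rule stable under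
multiplying the argument and the value by arbitrary elements of `A`.
-/

section GeneralizedDerivation

variable {A : Type*} [CommRing A] {D : A → A}

/-- The unary form of the generalized Leibniz rule, equivalent to the ordinary Leibniz rule for
`x ↦ D x - D 1 * x`. Additivity is not included: in a bracket it is part of multilinearity. -/
def IsGeneralizedDerivation (D : A → A) : Prop :=
  ∀ g h, D (g * h) = D g * h + g * D h - D 1 * g * h

theorem IsGeneralizedDerivation.const_mul (hD : IsGeneralizedDerivation D) (a : A) :
    IsGeneralizedDerivation fun x => a * D x := by
  intro g h
  linear_combination a * hD g h

theorem IsGeneralizedDerivation.comp_mul_left (hD : IsGeneralizedDerivation D) (a : A) :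
    IsGeneralizedDerivation fun x => D (a * x) := by
  intro g h
  have expand_agh : D (a * g * h) = D (a * g) * h + a * g * D h - D 1 * (a * g) * h := hD (a * g) h
  have expand_ah : D (a * h) = D a * h + a * D h - D 1 * a * h := hD a h
  simp only [mul_one, ← mul_assoc a g h]
  linear_combination expand_agh - g * expand_ah

end GeneralizedDerivation

/-- The maps `D` acting on the `n`-ary operation `b` by the product rule in its arguments. The
Filippov–Jacobi identity says that each `b(a_1,…,a_{n-1}, ·)` is such a map. -/
def IsBracketDerivation {A : Type*} [AddCommMonoid A] {n : ℕ} (b : (Fin n → A) → A)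
    (D : A → A) : Prop :=
  ∀ c, D (b c) = ∑ i, b (Function.update c i (D (c i)))

section GaugeTwist

variable {A : Type*} [CommRing A] {n : ℕ} {b : (Fin n → A) → A}

theorem gaugeTwist_update (b : (Fin n → A) → A) (φ : Aˣ) (f : Fin n → A) (i : Fin n) (x : A) :
    gaugeTwist b φ (Function.update f i x) =
      ↑φ⁻¹ * b (Function.update (fun j => φ * f j) i (φ * x)) := by
  rw [gaugeTwist]
  congr 2
  ext j
  exact Function.apply_update (fun _ y => (φ : A) * y) f i x j

theorem mul_gaugeTwist (b : (Fin n → A) → A) (φ : Aˣ) (f : Fin n → A) :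
    φ * gaugeTwist b φ f = b fun i => φ * f i :=
  φ.mul_inv_cancel_left _

theorem IsBracketDerivation.conj_gaugeTwist {D : A → A} (hD : IsBracketDerivation b D) (φ : Aˣ) :
    IsBracketDerivation (gaugeTwist b φ) fun x => ↑φ⁻¹ * D (φ * x) := by
  intro c
  calc ↑φ⁻¹ * D (φ * gaugeTwist b φ c)
      = ↑φ⁻¹ * ∑ i, b (Function.update (fun j => φ * c j) i (D (φ * c i))) := by
        rw [mul_gaugeTwist, hD]
    _ = ∑ i, gaugeTwist b φ (Function.update c i (↑φ⁻¹ * D (φ * c i))) := by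
        simp only [gaugeTwist_update, Units.mul_inv_cancel_left, Finset.mul_sum]

/-- Generalized `n`-Nambu–Poisson brackets on the `R`-algebra `A`. The slot `k` singled out in the
Filippov–Jacobi and Leibniz identities is arbitrary; it is the last one in the usual definition. -/
structure IsGeneralizedNambuPoisson (R : Type*) [CommSemiring R] [Algebra R A] (k : Fin n)
    (b : (Fin n → A) → A) : Prop where
  map_update_add : ∀ (f : Fin n → A) (i : Fin n) (x y : A),
    b (Function.update f i (x + y)) = b (Function.update f i x) + b (Function.update f i y)
  map_update_smul : ∀ (f : Fin n → A) (i : Fin n) (c : R) (x : A),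
    b (Function.update f i (c • x)) = c • b (Function.update f i x)
  map_eq_zero_of_eq : ∀ (f : Fin n → A) (i j : Fin n), i ≠ j → f i = f j → b f = 0
  filippovJacobi : ∀ a : Fin n → A, IsBracketDerivation b fun x => b (Function.update a k x)
  leibniz : ∀ f : Fin n → A, IsGeneralizedDerivation fun x => b (Function.update f k x)

theorem gaugeTwist_nambuPoisson_general {R : Type*} [CommSemiring R] [Algebra R A] {k : Fin n}
    (hb : IsGeneralizedNambuPoisson R k b) (φ : Aˣ) :
    IsGeneralizedNambuPoisson R k (gaugeTwist b φ) where
  map_update_add f i x y := by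
    simp only [gaugeTwist_update, mul_add, hb.map_update_add]
  map_update_smul f i c x := by
    simp only [gaugeTwist_update, mul_smul_comm, hb.map_update_smul]
  map_eq_zero_of_eq f i j hij hf := by
    rw [gaugeTwist, hb.map_eq_zero_of_eq _ i j hij (congrArg (φ.val * ·) hf), mul_zero]
  filippovJacobi a := by
    simpa only [gaugeTwist_update] using (hb.filippovJacobi fun j => φ * a j).conj_gaugeTwist φ
  leibniz f := by
    simpa only [gaugeTwist_update] using
      ((hb.leibniz fun j => φ * f j).comp_mul_left φ).const_mul ↑φ⁻¹

end GaugeTwist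

/-- If `(A, b, ·)` is a generalized n-Nambu-Poisson algebra over a field `F`
of characteristic zero (i.e. `b` is F-multilinear, alternating, satisfies the
Filippov–Jacobi identity and the generalized Leibniz rule), then for any
invertible `φ` the gauge-twisted bracket `b^φ` makes `(A, b^φ, ·)` again a
generalized n-Nambu-Poisson algebra. -/
theorem gaugeTwist_nambuPoisson (F : Type*) [Field F] [CharZero F]
    (A : Type*) [CommRing A] [Algebra F A] (n : ℕ) (hn : 1 ≤ n)
    (b : (Fin n → A) → A) (φ : Aˣ)
    (hadd : ∀ (f : Fin n → A) (i : Fin n) (x y : A),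
      b (Function.update f i (x + y)) =
        b (Function.update f i x) + b (Function.update f i y))
    (hsmul : ∀ (f : Fin n → A) (i : Fin n) (c : F) (x : A),
      b (Function.update f i (c • x)) = c • b (Function.update f i x))
    (halt : ∀ (f : Fin n → A) (i j : Fin n), i ≠ j → f i = f j → b f = 0)
    (hFJ : ∀ a c : Fin n → A,
      b (Function.update a ⟨n - 1, by omega⟩ (b c)) =
        ∑ i : Fin n, b (Function.update c i
          (b (Function.update a ⟨n - 1, by omega⟩ (c i)))))
    (hLeib : ∀ (f : Fin n → A) (g h : A),
      b (Function.update f ⟨n - 1, by omega⟩ (g * h)) =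
        b (Function.update f ⟨n - 1, by omega⟩ g) * h +
          g * b (Function.update f ⟨n - 1, by omega⟩ h) -
          b (Function.update f ⟨n - 1, by omega⟩ 1) * g * h) :
    (∀ (f : Fin n → A) (i : Fin n) (x y : A),
      gaugeTwist b φ (Function.update f i (x + y)) =
        gaugeTwist b φ (Function.update f i x) + gaugeTwist b φ (Function.update f i y)) ∧
    (∀ (f : Fin n → A) (i : Fin n) (c : F) (x : A),
      gaugeTwist b φ (Function.update f i (c • x)) =
        c • gaugeTwist b φ (Function.update f i x)) ∧
    (∀ (f : Fin n → A) (i j : Fin n), i ≠ j → f i = f j → gaugeTwist b φ f = 0) ∧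
    (∀ a c : Fin n → A,
      gaugeTwist b φ (Function.update a ⟨n - 1, by omega⟩ (gaugeTwist b φ c)) =
        ∑ i : Fin n, gaugeTwist b φ (Function.update c i
          (gaugeTwist b φ (Function.update a ⟨n - 1, by omega⟩ (c i))))) ∧
    (∀ (f : Fin n → A) (g h : A),
      gaugeTwist b φ (Function.update f ⟨n - 1, by omega⟩ (g * h)) =
        gaugeTwist b φ (Function.update f ⟨n - 1, by omega⟩ g) * h +
          g * gaugeTwist b φ (Function.update f ⟨n - 1, by omega⟩ h) -
          gaugeTwist b φ (Function.update f ⟨n - 1, by omega⟩ 1) * g * h) := by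
  obtain ⟨hadd', hsmul', halt', hFJ', hLeib'⟩ :=
    gaugeTwist_nambuPoisson_general ⟨hadd, hsmul, halt, hFJ, hLeib⟩ φ
  exact ⟨hadd', hsmul', halt', hFJ', hLeib'⟩
end
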